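/- arXiv:1502.07107 — 3 statements merged into one kernel-verified Lean document; each statement's English description precedes it below -/
import Mathlib

section
/- For every r ≥ 0 the n×n complex matrix A + G(r) is invertible. -/
open Matrix MeasureTheory

/-!
The matrix `G(r)` is the Gram matrix of the functions `sin (μ i ρ)` in `L²(0, r)`, hence positive
semidefinite. If `(A + G(r)) v = 0`, then `Re ⟨v, A v⟩ + ⟨v, G(r) v⟩ = 0`. Both terms are
nonnegative, so `⟨v, G(r) v⟩ = 0`, which semidefiniteness upgrades to `G(r) v = 0`. Then `A v = 0`,
and `v = 0` because `A` is invertible.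
-/

open scoped ComplexOrder

lemma memLp_sin_const_mul {ν : Measure ℝ} [IsFiniteMeasure ν] {p : ENNReal} (c : ℝ) :
    MemLp (fun ρ => Real.sin (c * ρ)) p ν :=
  .of_bound (by fun_prop) 1 (ae_of_all _ fun _ => Real.abs_sin_le_one _)

section

variable {ι α 𝕜 E : Type*} [RCLike 𝕜]

lemma posSemidef_integral_inner [NormedAddCommGroup E] [InnerProductSpace 𝕜 E] [Finite ι]
    [MeasurableSpace α] {ν : Measure α} {f : ι → α → E} (hf : ∀ i, MemLp (f i) 2 ν) :
    (of fun i j => ∫ x, inner 𝕜 (f i x) (f j x) ∂ν).PosSemidef := by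
  suffices hgram : gram 𝕜 (fun i => (hf i).toLp) =
      of fun i j => ∫ x, inner 𝕜 (f i x) (f j x) ∂ν from
    hgram ▸ posSemidef_gram 𝕜 _
  ext i j
  rw [gram_apply, L2.inner_def, of_apply]
  apply integral_congr_ae
  filter_upwards [(hf i).coeFn_toLp, (hf j).coeFn_toLp] with x hi hj
  rw [hi, hj]

lemma posSemidef_ofReal_integral_mul [Finite ι] [MeasurableSpace α] {ν : Measure α} {f : ι → α → ℝ}
    (hf : ∀ i, MemLp (f i) 2 ν) :
    (of fun i j => ((∫ x, f i x * f j x ∂ν : ℝ) : 𝕜)).PosSemidef := by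
  convert posSemidef_integral_inner (𝕜 := 𝕜) fun i => (hf i).ofReal (K := 𝕜) using 4 with i j
  simp only [RCLike.inner_apply, RCLike.conj_ofReal, ← RCLike.ofReal_mul, integral_ofReal, mul_comm]

variable [Fintype ι] [DecidableEq ι]

lemma isUnit_add_of_re_nonneg_of_posSemidef {A M : Matrix ι ι 𝕜} (hA : IsUnit A)
    (hA_re : ∀ v, 0 ≤ RCLike.re (star v ⬝ᵥ A *ᵥ v)) (hM : M.PosSemidef) : IsUnit (A + M) := by
  rw [← mulVec_injective_iff_isUnit, ← coe_mulVecLin, injective_iff_map_eq_zero]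
  intro v hv
  rw [mulVecLin_apply, add_mulVec] at hv
  have hform : star v ⬝ᵥ A *ᵥ v + star v ⬝ᵥ M *ᵥ v = 0 := by
    rw [← dotProduct_add, hv, dotProduct_zero]
  have hM_nonneg := RCLike.nonneg_iff.1 (hM.dotProduct_mulVec_nonneg v)
  have hM_re : RCLike.re (star v ⬝ᵥ M *ᵥ v) = 0 := by
    have hre := congrArg RCLike.re hform
    rw [map_add, map_zero] at hre
    linarith [hA_re v, hM_nonneg.1]
  have hMv : M *ᵥ v = 0 :=
    (hM.dotProduct_mulVec_zero_iff v).1 <|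
      RCLike.ext (by rw [hM_re, map_zero]) (by rw [hM_nonneg.2, map_zero])
  rw [hMv, add_zero] at hv
  exact mulVec_injective_of_isUnit hA (hv.trans (mulVec_zero A).symm)

lemma re_star_dotProduct_diagonal_mulVec_nonneg {a : ι → 𝕜} (ha : ∀ i, 0 ≤ RCLike.re (a i))
    (v : ι → 𝕜) : 0 ≤ RCLike.re (star v ⬝ᵥ diagonal a *ᵥ v) := by
  simp only [dotProduct, mulVec_diagonal, Pi.star_apply, map_sum]
  refine Finset.sum_nonneg fun i _ => ?_
  rw [mul_left_comm, RCLike.star_def, RCLike.conj_mul, ← RCLike.ofReal_pow, RCLike.re_mul_ofReal]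
  exact mul_nonneg (ha i) (sq_nonneg _)

theorem stmt_1_general {A : Matrix ι ι 𝕜} (hA : IsUnit A)
    (hA_re : ∀ v, 0 ≤ RCLike.re (star v ⬝ᵥ A *ᵥ v)) [MeasurableSpace α] {ν : Measure α}
    {f : ι → α → ℝ} (hf : ∀ i, MemLp (f i) 2 ν) :
    IsUnit (A + of fun i j => ((∫ x, f i x * f j x ∂ν : ℝ) : 𝕜)) :=
  isUnit_add_of_re_nonneg_of_posSemidef hA hA_re (posSemidef_ofReal_integral_mul hf)

end

/-- `A + G(r)` is invertible for every `r ≥ 0`. -/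
theorem stmt_1 (n : ℕ) (hn : 1 ≤ n) (μ : Fin n → ℝ)
    (hμpos : ∀ i, 0 < μ i) (hμanti : StrictAnti μ)
    (G : ℝ → Matrix (Fin n) (Fin n) ℂ)
    (hG : ∀ (r : ℝ) (i j : Fin n),
      G r i j = ((∫ ρ in (0:ℝ)..r, Real.sin (μ i * ρ) * Real.sin (μ j * ρ) : ℝ) : ℂ))
    (a : Fin n → ℂ) (ha : ∀ j, a j ≠ 0 ∧ 0 ≤ (a j).re) :
    ∀ r : ℝ, 0 ≤ r → IsUnit (Matrix.diagonal a + G r) := by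
  intro r hr
  have hA : IsUnit (diagonal a) := isUnit_diagonal.2 (Pi.isUnit_iff.2 fun j => (ha j).1.isUnit)
  rw [show G r = of _ from Matrix.ext (hG r)]
  simp only [intervalIntegral.integral_of_le hr]
  exact stmt_1_general hA (re_star_dotProduct_diagonal_mulVec_nonneg fun j => (ha j).2)
    fun i => memLp_sin_const_mul (μ i)
end

section
/- There exists a constant C > 0 such that for every j ∈ {1, …, n} and every r ≥ 0 one has |v_j(r)| ≤ C · r/(1 + r²). -/
open Matrix MeasureTheory

/-!
Since `sin (μ i ρ) sin (μ j ρ)` has mean `1/2` on the diagonal and mean `0` off it, with bounded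
primitives of the oscillating remainder, the Gram matrix `G r` stays within bounded distance of
`(r/2) • 1`. Hence `‖(A + G r)⁻¹‖ = O(1/r)` at infinity, while on compact intervals this norm is
bounded by continuity of the inverse; together `‖(A + G r)⁻¹‖ ≤ C / (1 + r)`. Finally
`‖s r‖ ≤ B * min 1 r`, and `min 1 r / (1 + r) ≤ r / (1 + r²)`.
-/

section NormedAlgebra

variable {R : Type*} [NormedRing R] [NormedAlgebra ℝ R]

lemma sub_mul_norm_ringInverse_le {x : R} (hx : IsUnit x) {t K : ℝ} (hxt : ‖x - t • 1‖ ≤ K) :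
    (t - K) * ‖Ring.inverse x‖ ≤ ‖(1 : R)‖ := by
  have hsmul : t • Ring.inverse x = 1 - (x - t • 1) * Ring.inverse x := by
    rw [sub_mul, Ring.mul_inverse_cancel _ hx, smul_one_mul, sub_sub_cancel]
  have hnorm : t * ‖Ring.inverse x‖ ≤ ‖(1 : R)‖ + K * ‖Ring.inverse x‖ :=
    calc t * ‖Ring.inverse x‖
        ≤ ‖t • Ring.inverse x‖ := by
          rw [norm_smul]
          gcongr
          exact Real.le_norm_self t
      _ ≤ ‖(1 : R)‖ + ‖x - t • 1‖ * ‖Ring.inverse x‖ := by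
          rw [hsmul]
          exact (norm_sub_le _ _).trans (add_le_add_right (norm_mul_le _ _) _)
      _ ≤ ‖(1 : R)‖ + K * ‖Ring.inverse x‖ := by gcongr
  linarith

variable [HasSummableGeomSeries R] {M : ℝ → R} {c K : ℝ}

lemma exists_norm_ringInverse_le (hc : 0 < c) (hcont : ContinuousOn M (Set.Ici 0))
    (hunit : ∀ r, 0 ≤ r → IsUnit (M r)) (hclose : ∀ r, 0 ≤ r → ‖M r - (c * r) • 1‖ ≤ K) :
    ∃ B, ∀ r, 0 ≤ r → ‖Ring.inverse (M r)‖ ≤ B := by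
  have hinv : ContinuousOn (fun r => Ring.inverse (M r)) (Set.Ici 0) := fun r hr =>
    ContinuousAt.comp_continuousWithinAt (f := M)
      (NormedRing.inverse_continuousAt (hunit r hr).unit) (hcont r hr)
  obtain ⟨B, hB⟩ := (isCompact_Icc (a := 0) (b := (K + 1) / c)).exists_bound_of_continuousOn
    (hinv.mono Set.Icc_subset_Ici_self)
  refine ⟨max B ‖(1 : R)‖, fun r hr => ?_⟩
  rcases le_total r ((K + 1) / c) with hsmall | hlarge
  · exact (hB r ⟨hr, hsmall⟩).trans (le_max_left _ _)
  · have hgap : 1 ≤ c * r - K := by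
      rw [div_le_iff₀' hc] at hlarge
      linarith
    calc ‖Ring.inverse (M r)‖
        ≤ (c * r - K) * ‖Ring.inverse (M r)‖ := le_mul_of_one_le_left (norm_nonneg _) hgap
      _ ≤ ‖(1 : R)‖ := sub_mul_norm_ringInverse_le (hunit r hr) (hclose r hr)
      _ ≤ max B ‖(1 : R)‖ := le_max_right _ _

lemma exists_norm_ringInverse_le_div_one_add (hc : 0 < c) (hcont : ContinuousOn M (Set.Ici 0))
    (hunit : ∀ r, 0 ≤ r → IsUnit (M r)) (hclose : ∀ r, 0 ≤ r → ‖M r - (c * r) • 1‖ ≤ K) :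
    ∃ C, ∀ r, 0 ≤ r → ‖Ring.inverse (M r)‖ ≤ C / (1 + r) := by
  obtain ⟨B, hB⟩ := exists_norm_ringInverse_le hc hcont hunit hclose
  have hK : 0 ≤ K := (norm_nonneg _).trans (hclose 0 le_rfl)
  refine ⟨((c + K) * B + ‖(1 : R)‖) / c, fun r hr => ?_⟩
  rw [le_div_iff₀ (by positivity), le_div_iff₀ hc]
  calc ‖Ring.inverse (M r)‖ * (1 + r) * c
      = (c + K) * ‖Ring.inverse (M r)‖ + (c * r - K) * ‖Ring.inverse (M r)‖ := by ring
    _ ≤ (c + K) * B + ‖(1 : R)‖ := by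
      gcongr
      · exact hB r hr
      · exact sub_mul_norm_ringInverse_le (hunit r hr) (hclose r hr)

end NormedAlgebra

section Trigonometric

lemma abs_integral_cos_mul_le {c : ℝ} (hc : c ≠ 0) (r : ℝ) :
    |∫ ρ in (0 : ℝ)..r, Real.cos (c * ρ)| ≤ |c|⁻¹ := by
  rw [intervalIntegral.integral_comp_mul_left Real.cos hc, integral_cos, mul_zero, Real.sin_zero,
    sub_zero, smul_eq_mul, abs_mul, abs_inv]
  exact mul_le_of_le_one_right (by positivity) (Real.abs_sin_le_one _)

lemma integral_sin_mul_sin (a b r : ℝ) :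
    ∫ ρ in (0 : ℝ)..r, Real.sin (a * ρ) * Real.sin (b * ρ) =
      ((∫ ρ in (0 : ℝ)..r, Real.cos ((a - b) * ρ)) -
        ∫ ρ in (0 : ℝ)..r, Real.cos ((a + b) * ρ)) / 2 := by
  rw [← intervalIntegral.integral_sub
    (Continuous.intervalIntegrable (by fun_prop) _ _)
    (Continuous.intervalIntegrable (by fun_prop) _ _), ← intervalIntegral.integral_div]
  refine intervalIntegral.integral_congr fun ρ _ => ?_
  simp only [sub_mul, add_mul, Real.cos_sub, Real.cos_add]
  ring

lemma abs_integral_sin_mul_sin_le {a b : ℝ} (hab : |a| ≠ |b|) (r : ℝ) :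
    |∫ ρ in (0 : ℝ)..r, Real.sin (a * ρ) * Real.sin (b * ρ)| ≤
      (|a - b|⁻¹ + |a + b|⁻¹) / 2 := by
  obtain ⟨hsub, hadd⟩ := not_or.1 (mt abs_eq_abs.2 hab)
  rw [integral_sin_mul_sin, abs_div, abs_two]
  gcongr
  exact (abs_sub _ _).trans (add_le_add (abs_integral_cos_mul_le (sub_ne_zero.2 hsub) r)
    (abs_integral_cos_mul_le (mt add_eq_zero_iff_eq_neg.1 hadd) r))

lemma abs_integral_sin_mul_sin_self_sub_le {a : ℝ} (ha : a ≠ 0) (r : ℝ) :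
    |(∫ ρ in (0 : ℝ)..r, Real.sin (a * ρ) * Real.sin (a * ρ)) - r / 2| ≤ |a + a|⁻¹ / 2 := by
  have hsplit : (∫ ρ in (0 : ℝ)..r, Real.sin (a * ρ) * Real.sin (a * ρ)) - r / 2 =
      -(∫ ρ in (0 : ℝ)..r, Real.cos ((a + a) * ρ)) / 2 := by
    rw [integral_sin_mul_sin]
    simp only [sub_self, zero_mul, Real.cos_zero, intervalIntegral.integral_const, sub_zero,
      smul_eq_mul, mul_one]
    ring
  rw [hsplit, abs_div, abs_neg, abs_two]
  gcongr
  exact abs_integral_cos_mul_le (add_self_eq_zero.not.2 ha) r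

lemma abs_sin_mul_le_mul_min (a : ℝ) {r : ℝ} (hr : 0 ≤ r) :
    |Real.sin (a * r)| ≤ (1 + |a|) * min 1 r := by
  rw [mul_min_of_nonneg _ _ (by positivity), mul_one]
  refine le_min ((Real.abs_sin_le_one _).trans (by simp)) ?_
  calc |Real.sin (a * r)|
      ≤ |a * r| := Real.abs_sin_le_abs
    _ = |a| * r := by rw [abs_mul, abs_of_nonneg hr]
    _ ≤ (1 + |a|) * r := by
      gcongr
      linarith

end Trigonometric

lemma min_one_div_one_add_le {r : ℝ} (hr : 0 ≤ r) : min 1 r / (1 + r) ≤ r / (1 + r ^ 2) := by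
  rw [div_le_div_iff₀ (by positivity) (by positivity)]
  rcases le_total r 1 with h | h
  · rw [min_eq_right h]
    gcongr
    nlinarith
  · rw [min_eq_left h]
    nlinarith

section SineGram

open scoped Matrix.Norms.Operator

variable {ι : Type*}

/-- The Gram matrix of the functions `ρ ↦ sin (μ i * ρ)` in `L²(0, r)`, with its real entries
regarded as complex numbers. -/
noncomputable def sineGram (μ : ι → ℝ) (r : ℝ) : Matrix ι ι ℂ :=
  of fun i j => ((∫ ρ in (0 : ℝ)..r, Real.sin (μ i * ρ) * Real.sin (μ j * ρ) : ℝ) : ℂ)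

lemma continuous_sineGram (μ : ι → ℝ) : Continuous (sineGram μ) :=
  continuous_matrix fun _ _ => Complex.continuous_ofReal.comp
    (intervalIntegral.continuous_primitive
      (fun _ _ => Continuous.intervalIntegrable (by fun_prop) _ _) 0)

variable [Fintype ι]

lemma linfty_opNorm_le_of_norm_apply_le {κ α : Type*} [Fintype κ] [SeminormedAddCommGroup α]
    {M : Matrix ι κ α} {B : Matrix ι κ ℝ} (h : ∀ i j, ‖M i j‖ ≤ B i j) : ‖M‖ ≤ ‖B‖ := by
  rw [linfty_opNorm_def, linfty_opNorm_def, NNReal.coe_le_coe]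
  refine Finset.sup_mono_fun fun i _ => Finset.sum_le_sum fun j _ => ?_
  exact (h i j).trans (Real.le_norm_self _)

lemma exists_norm_sineGram_sub_le [DecidableEq ι] {μ : ι → ℝ} (hμ0 : ∀ i, μ i ≠ 0)
    (hμ : Function.Injective fun i => |μ i|) :
    ∃ K, ∀ r : ℝ, ‖sineGram μ r - (1 / 2 * r) • (1 : Matrix ι ι ℂ)‖ ≤ K := by
  -- On the diagonal the first summand is `|0|⁻¹ = 0`.
  refine ⟨‖of fun i j => (|μ i - μ j|⁻¹ + |μ i + μ j|⁻¹) / 2‖, fun r =>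
    linfty_opNorm_le_of_norm_apply_le fun i j => ?_⟩
  rcases eq_or_ne i j with rfl | hij
  · have hentry := abs_integral_sin_mul_sin_self_sub_le (hμ0 i) r
    rw [← Real.norm_eq_abs, ← Complex.norm_real] at hentry
    simpa [sineGram, div_eq_inv_mul] using hentry
  · have hentry := abs_integral_sin_mul_sin_le (hμ.ne hij) r
    rw [← Real.norm_eq_abs, ← Complex.norm_real] at hentry
    simpa [sineGram, hij] using hentry

lemma exists_norm_inv_add_sineGram_le [DecidableEq ι] {μ : ι → ℝ} (hμ0 : ∀ i, μ i ≠ 0)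
    (hμ : Function.Injective fun i => |μ i|) {A : Matrix ι ι ℂ}
    (hinv : ∀ r : ℝ, 0 ≤ r → IsUnit (A + sineGram μ r)) :
    ∃ C, ∀ r : ℝ, 0 ≤ r → ‖(A + sineGram μ r)⁻¹‖ ≤ C / (1 + r) := by
  obtain ⟨K, hK⟩ := exists_norm_sineGram_sub_le hμ0 hμ
  simp only [nonsing_inv_eq_ringInverse]
  refine exists_norm_ringInverse_le_div_one_add one_half_pos
    (continuous_const.add (continuous_sineGram μ)).continuousOn hinv (K := ‖A‖ + K) fun r _ => ?_
  rw [add_sub_assoc]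
  exact norm_add_le_of_le le_rfl (hK r)

lemma norm_sin_mul_le_mul_min (μ : ι → ℝ) {r : ℝ} (hr : 0 ≤ r) :
    ‖fun i => ((Real.sin (μ i * r) : ℝ) : ℂ)‖ ≤ (1 + ‖μ‖) * min 1 r := by
  refine (pi_norm_le_iff_of_nonneg (by positivity)).2 fun i => ?_
  rw [Complex.norm_real]
  refine (abs_sin_mul_le_mul_min (μ i) hr).trans ?_
  gcongr
  exact norm_le_pi_norm μ i

theorem stmt_6_general [DecidableEq ι] (μ : ι → ℝ) (hμ0 : ∀ i, μ i ≠ 0)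
    (hμ : Function.Injective fun i => |μ i|) (A : Matrix ι ι ℂ)
    (hinv : ∀ r : ℝ, 0 ≤ r → IsUnit (A + sineGram μ r)) :
    ∃ C > 0, ∀ r : ℝ, 0 ≤ r →
      ‖(A + sineGram μ r)⁻¹ *ᵥ fun i => ((Real.sin (μ i * r) : ℝ) : ℂ)‖ ≤
        C * (r / (1 + r ^ 2)) := by
  obtain ⟨C, hC⟩ := exists_norm_inv_add_sineGram_le hμ0 hμ hinv
  have hC0 : 0 ≤ C := by simpa using (norm_nonneg _).trans (hC 0 le_rfl)
  refine ⟨(C + 1) * (1 + ‖μ‖), by positivity, fun r hr => ?_⟩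
  calc ‖(A + sineGram μ r)⁻¹ *ᵥ fun i => ((Real.sin (μ i * r) : ℝ) : ℂ)‖
      ≤ C / (1 + r) * ((1 + ‖μ‖) * min 1 r) :=
        (linfty_opNorm_mulVec _ _).trans
          (mul_le_mul (hC r hr) (norm_sin_mul_le_mul_min μ hr) (norm_nonneg _) (by positivity))
    _ = C * (1 + ‖μ‖) * (min 1 r / (1 + r)) := by ring
    _ ≤ (C + 1) * (1 + ‖μ‖) * (r / (1 + r ^ 2)) := by
        gcongr ?_ * _ * ?_
        · linarith
        · exact min_one_div_one_add_le hr

end SineGram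

/-- the pointwise bound `|v_j(r)| ≤ C r/(1+r²)`. -/
theorem stmt_6 (n : ℕ) (hn : 1 ≤ n) (μ : Fin n → ℝ)
    (hμpos : ∀ i, 0 < μ i) (hμanti : StrictAnti μ)
    (G : ℝ → Matrix (Fin n) (Fin n) ℂ)
    (hG : ∀ (r : ℝ) (i j : Fin n),
      G r i j = ((∫ ρ in (0:ℝ)..r, Real.sin (μ i * ρ) * Real.sin (μ j * ρ) : ℝ) : ℂ))
    (a : Fin n → ℂ) (ha : ∀ j, a j ≠ 0 ∧ 0 ≤ (a j).re) (hinv : ∀ r : ℝ, 0 ≤ r → IsUnit (Matrix.diagonal a + G r))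
    (s : ℝ → Fin n → ℂ) (hs : ∀ (r : ℝ) (i : Fin n), s r i = ((Real.sin (μ i * r) : ℝ) : ℂ))
    (v : ℝ → Fin n → ℂ) (hv : ∀ r : ℝ, v r = -((Matrix.diagonal a + G r)⁻¹ *ᵥ s r)) :
    ∃ C > (0:ℝ), ∀ (j : Fin n), ∀ r : ℝ, 0 ≤ r → ‖v r j‖ ≤ C * (r / (1 + r ^ 2)) := by
  obtain rfl : G = sineGram μ := funext fun r => Matrix.ext (hG r)
  obtain rfl : s = fun r i => ((Real.sin (μ i * r) : ℝ) : ℂ) := funext₂ hs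
  obtain ⟨C, hC, hbound⟩ := stmt_6_general μ (fun i => (hμpos i).ne')
    (by simpa only [abs_of_pos (hμpos _)] using hμanti.injective) (diagonal a) hinv
  refine ⟨C, hC, fun j r hr => (norm_le_pi_norm (v r) j).trans ?_⟩
  rw [hv, norm_neg]
  exact hbound r hr
end

section
/- There exist constants C > 0 and r₀ > 0 such that for all r ≥ r₀ one has |V(r) + (4/r) Σ_{j=1}^n μ_j sin(2μ_j r) − (8/r²)( Σ_{j=1}^n a_j μ_j sin(2μ_j r) + W(r) )| ≤ C r⁻³, where W(r) := ( Σ_{j=1}^n sin²(μ_j r) )² + 2 Σ_{i,j=1}^n h_{ij}(r) μ_i sin(μ_j r) cos(μ_i r). -/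
open Matrix MeasureTheory

/-!
Write `M r = Diag a + G r`. Since `M' = s sᵀ` and `M` is symmetric, differentiating `s ⬝ M⁻¹ s`
gives `V = -4 (s' ⬝ M⁻¹ s) + 2 (s ⬝ M⁻¹ s)²`. The product formula for sines splits `G r` as
`(r / 2) 1 + H r` with `H` bounded and oscillating, so `M⁻¹` has the Neumann expansion
`(2 / r) 1 - (4 / r²) (Diag a + H r) + O(r⁻³)`, which also shows that `M r` is invertible for all
large `r`. Substituting it, up to second order in the linear term and up to first order in the
squared one, gives the expansion of `V`.
-/

open Filter Asymptotics Bornology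
open scoped Topology Ring Matrix.Norms.Operator

section NeumannExpansion

variable {α 𝕜 R : Type*} [NormedField 𝕜] [NormedRing R] [NormedAlgebra 𝕜 R]
  {l : Filter α} {z : α → 𝕜} {N : α → R}

theorem ringInverse_smul {𝕜 R : Type*} [Field 𝕜] [Ring R] [Algebra 𝕜 R] {c : 𝕜} (hc : c ≠ 0)
    (x : R) : (c • x)⁻¹ʳ = c⁻¹ • x⁻¹ʳ := by
  have hinv : (algebraMap 𝕜 R c)⁻¹ʳ = algebraMap 𝕜 R c⁻¹ :=
    Ring.inverse_unit (Units.map (algebraMap 𝕜 R).toMonoidHom (Units.mk0 c hc))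
  rw [Algebra.smul_def, Ring.mul_inverse_rev' (Algebra.commutes c x), hinv, Algebra.smul_def,
    Algebra.commutes]

theorem tendsto_inv_smul_zero {E : Type*} [SeminormedAddCommGroup E] [NormedSpace 𝕜 E]
    {f : α → E} (hz : Tendsto z l (cobounded 𝕜)) (hf : f =O[l] fun _ => (1 : 𝕜)) :
    Tendsto (fun x => (z x)⁻¹ • f x) l (𝓝 0) :=
  (tendsto_inv₀_cobounded.comp hz).zero_smul_isBoundedUnder_le ((isBigO_one_iff 𝕜).1 hf)

variable [HasSummableGeomSeries R]

theorem eventually_isUnit_smul_one_add (hz : Tendsto z l (cobounded 𝕜))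
    (hN : N =O[l] fun _ => (1 : 𝕜)) : ∀ᶠ x in l, IsUnit (z x • (1 : R) + N x) := by
  have hunit : ∀ᶠ y in 𝓝 (0 : R), IsUnit (1 + y) :=
    ((continuous_const_add (1 : R)).tendsto' 0 1 (add_zero 1)).eventually (Units.nhds 1)
  filter_upwards [(tendsto_inv_smul_zero hz hN).eventually hunit,
    hz.eventually (eventually_ne_cobounded 0)] with x hx hzx
  have hfactor : z x • (1 : R) + N x = Units.mk0 (z x) hzx • (1 + (z x)⁻¹ • N x) := by
    simp [Units.smul_def, smul_inv_smul₀ hzx]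
  rw [hfactor]
  exact hx.smul _

theorem isBigO_inverse_smul_one_add_sub (hz : Tendsto z l (cobounded 𝕜))
    (hN : N =O[l] fun _ => (1 : 𝕜)) (k : ℕ) :
    (fun x => (z x • (1 : R) + N x)⁻¹ʳ - ∑ i ∈ Finset.range k, (z x)⁻¹ ^ (i + 1) • (-N x) ^ i)
      =O[l] fun x => (z x)⁻¹ ^ (k + 1) := by
  have hgeom := (NormedRing.inverse_add_norm_diff_nth_order (1 : Rˣ) k).comp_tendsto
    (tendsto_inv_smul_zero hz hN)
  have hpow : (fun x => ‖(z x)⁻¹ • N x‖ ^ k) =O[l] fun x => (z x)⁻¹ ^ k := by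
    simpa only [smul_eq_mul, mul_one] using
      ((isBigO_refl (fun x => (z x)⁻¹) l).smul hN).norm_left.pow k
  refine ((isBigO_refl (fun x => (z x)⁻¹) l).smul (hgeom.trans hpow)).congr' ?_
    (.of_forall fun x => (pow_succ' _ _).symm)
  filter_upwards [hz.eventually (eventually_ne_cobounded 0)] with x hzx
  have hfactor : z x • (1 : R) + N x = z x • (1 + (z x)⁻¹ • N x) := by
    rw [smul_add, smul_inv_smul₀ hzx]
  rw [hfactor, ringInverse_smul hzx]
  simp [smul_sub, Finset.smul_sum, ← smul_neg, smul_pow, smul_smul, pow_succ']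

end NeumannExpansion

section MatrixCalculus

variable {ι 𝕜 K : Type*} [NontriviallyNormedField 𝕜] [NormedCommRing K] [NormedAlgebra 𝕜 K] {r : 𝕜}

theorem hasDerivAt_matrix_iff [Finite ι] {M : 𝕜 → Matrix ι ι K} {M' : Matrix ι ι K} :
    HasDerivAt M M' r ↔ ∀ i j, HasDerivAt (fun t => M t i j) (M' i j) r := by
  cases nonempty_fintype ι
  exact (hasDerivAt_pi (φ := fun t => M t) (φ' := M')).trans
    (forall_congr' fun _ => hasDerivAt_pi)

variable [Fintype ι]

-- Instance search fails because it does not see that the operator norm induces the uniformity of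
-- `Matrix.instCompleteSpace`.
instance hasSummableGeomSeries_matrix [DecidableEq ι] [CompleteSpace K] :
    HasSummableGeomSeries (Matrix ι ι K) :=
  @instHasSummableGeomSeriesOfCompleteSpace _ _ (Matrix.instCompleteSpace ..)

theorem hasDerivAt_dotProduct {x y : 𝕜 → ι → K} {x' y' : ι → K} (hx : HasDerivAt x x' r)
    (hy : HasDerivAt y y' r) :
    HasDerivAt (fun t => x t ⬝ᵥ y t) (x' ⬝ᵥ y r + x r ⬝ᵥ y') r := by
  simp only [dotProduct, ← Finset.sum_add_distrib]
  exact HasDerivAt.fun_sum fun i _ => (hasDerivAt_pi.1 hx i).mul (hasDerivAt_pi.1 hy i)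

theorem hasDerivAt_mulVec {M : 𝕜 → Matrix ι ι K} {M' : Matrix ι ι K} {x : 𝕜 → ι → K} {x' : ι → K}
    (hM : HasDerivAt M M' r) (hx : HasDerivAt x x' r) :
    HasDerivAt (fun t => M t *ᵥ x t) (M' *ᵥ x r + M r *ᵥ x') r :=
  hasDerivAt_pi.2 fun i => hasDerivAt_dotProduct (hasDerivAt_pi.1 hM i) hx

variable [DecidableEq ι] [CompleteSpace K]

theorem hasDerivAt_matrix_inv {M : 𝕜 → Matrix ι ι K} {M' : Matrix ι ι K}
    (hM : HasDerivAt M M' r) (hunit : IsUnit (M r)) :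
    HasDerivAt (fun t => (M t)⁻¹) (-((M r)⁻¹ * M' * (M r)⁻¹)) r := by
  obtain ⟨u, hu⟩ := hunit
  have hinv := hasFDerivAt_ringInverse (𝕜 := 𝕜) u
  rw [hu] at hinv
  simp only [nonsing_inv_eq_ringInverse]
  rw [← hu, Ring.inverse_unit]
  exact hinv.comp_hasDerivAt r hM

theorem hasDerivAt_dotProduct_inv_mulVec {M : 𝕜 → Matrix ι ι K} {M' : Matrix ι ι K}
    {s : 𝕜 → ι → K} {s' : ι → K} (hs : HasDerivAt s s' r) (hM : HasDerivAt M M' r)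
    (hunit : IsUnit (M r)) (hsymm : (M r).IsSymm) :
    HasDerivAt (fun t => s t ⬝ᵥ (M t)⁻¹ *ᵥ s t)
      (2 * (s' ⬝ᵥ (M r)⁻¹ *ᵥ s r) - (M r)⁻¹ *ᵥ s r ⬝ᵥ M' *ᵥ ((M r)⁻¹ *ᵥ s r)) r := by
  have hswap (x y : ι → K) : x ⬝ᵥ (M r)⁻¹ *ᵥ y = (M r)⁻¹ *ᵥ x ⬝ᵥ y := by
    rw [dotProduct_mulVec, ← mulVec_transpose, transpose_nonsing_inv, hsymm.eq]
  refine (hasDerivAt_dotProduct hs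
    (hasDerivAt_mulVec (hasDerivAt_matrix_inv hM hunit) hs)).congr_deriv ?_
  rw [dotProduct_add, neg_mulVec, dotProduct_neg, ← mulVec_mulVec, ← mulVec_mulVec, hswap (s r),
    hswap (s r) s', dotProduct_comm _ s']
  ring

theorem hasDerivAt_dotProduct_inv_mulVec_of_vecMulVec {M : 𝕜 → Matrix ι ι K}
    {s : 𝕜 → ι → K} {s' : ι → K} (hs : HasDerivAt s s' r)
    (hM : HasDerivAt M (vecMulVec (s r) (s r)) r) (hunit : IsUnit (M r))
    (hsymm : (M r).IsSymm) :
    HasDerivAt (fun t => s t ⬝ᵥ (M t)⁻¹ *ᵥ s t)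
      (2 * (s' ⬝ᵥ (M r)⁻¹ *ᵥ s r) - (s r ⬝ᵥ (M r)⁻¹ *ᵥ s r) ^ 2) r := by
  refine (hasDerivAt_dotProduct_inv_mulVec hs hM hunit hsymm).congr_deriv ?_
  rw [vecMulVec_mulVec, op_smul_eq_smul, dotProduct_smul, dotProduct_comm _ (s r), smul_eq_mul, sq]

end MatrixCalculus

section MatrixAsymptotics

variable {α ι K F : Type*} [Fintype ι] [NormedField F] {l : Filter α}

theorem isBigO_matrix_of_apply [NormedRing K] [DecidableEq ι] {M : α → Matrix ι ι K} {g : α → F}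
    (hM : ∀ i j, (fun t => M t i j) =O[l] g) : M =O[l] g := by
  rw [funext fun t => matrix_eq_sum_single (M t)]
  refine IsBigO.fun_sum fun i _ => IsBigO.fun_sum fun j _ => ?_
  have hsingle : (fun t => M t i j • single i j (1 : K)) =O[l] fun t => g t • (1 : F) :=
    (hM i j).smul (isBigO_const_const _ one_ne_zero l)
  simpa [smul_single] using hsingle

theorem isBigO_dotProduct [NormedRing K] {x y : α → ι → K} {f g : α → F} (hx : x =O[l] f)
    (hy : y =O[l] g) : (fun t => x t ⬝ᵥ y t) =O[l] fun t => f t * g t :=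
  IsBigO.fun_sum fun i _ => (isBigO_pi.1 hx i).mul (isBigO_pi.1 hy i)

theorem isBigO_mulVec [NormedRing K] {E : α → Matrix ι ι K} {y : α → ι → K} {f g : α → F}
    (hE : E =O[l] f) (hy : y =O[l] g) : (fun t => E t *ᵥ y t) =O[l] fun t => f t * g t :=
  (IsBigO.of_norm_le fun t => linfty_opNorm_mulVec (E t) (y t)).trans
    (hE.norm_left.mul hy.norm_left)

variable [DecidableEq ι] [NormedField K] [CompleteSpace K]

theorem isBigO_dotProduct_inv_mulVec_sub {x y : α → ι → K} {z : α → K} {N : α → Matrix ι ι K}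
    (hz : Tendsto z l (cobounded K)) (hN : N =O[l] fun _ => (1 : K))
    (hx : x =O[l] fun _ => (1 : K)) (hy : y =O[l] fun _ => (1 : K)) (k : ℕ) :
    (fun t => x t ⬝ᵥ (z t • (1 : Matrix ι ι K) + N t)⁻¹ *ᵥ y t
        - ∑ i ∈ Finset.range k, (z t)⁻¹ ^ (i + 1) * (x t ⬝ᵥ (-N t) ^ i *ᵥ y t))
      =O[l] fun t => (z t)⁻¹ ^ (k + 1) := by
  refine (isBigO_dotProduct hx
    (isBigO_mulVec (isBigO_inverse_smul_one_add_sub hz hN k) hy)).congr (fun t => ?_) (by simp)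
  simp [nonsing_inv_eq_ringInverse, sub_mulVec, dotProduct_sub, sum_mulVec, dotProduct_sum,
    smul_mulVec]

theorem isBigO_deriv_dotProduct_inv_mulVec_sub {𝕜 : Type*} [NontriviallyNormedField 𝕜]
    [NormedAlgebra 𝕜 K] {l : Filter 𝕜} {s s' : 𝕜 → ι → K} {z : 𝕜 → K} {M N : 𝕜 → Matrix ι ι K}
    (hs : ∀ r, HasDerivAt s (s' r) r) (hM : ∀ r, HasDerivAt M (vecMulVec (s r) (s r)) r)
    (hsymm : ∀ r, (M r).IsSymm) (hMN : ∀ r, M r = z r • (1 : Matrix ι ι K) + N r)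
    (hz : Tendsto z l (cobounded K)) (hN : N =O[l] fun _ => (1 : K))
    (hsO : s =O[l] fun _ => (1 : K)) (hsO' : s' =O[l] fun _ => (1 : K)) :
    (fun r => deriv (fun t => s t ⬝ᵥ (M t)⁻¹ *ᵥ s t) r
        - (2 * (z r)⁻¹ * (s' r ⬝ᵥ s r)
          - (z r)⁻¹ ^ 2 * ((s r ⬝ᵥ s r) ^ 2 + 2 * (s' r ⬝ᵥ N r *ᵥ s r))))
      =O[l] fun r => (z r)⁻¹ ^ 3 := by
  have hlin := isBigO_dotProduct_inv_mulVec_sub hz hN hsO' hsO 2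
  have hquad₀ := isBigO_dotProduct_inv_mulVec_sub hz hN hsO hsO 0
  have hquad₁ := isBigO_dotProduct_inv_mulVec_sub hz hN hsO hsO 1
  simp only [Finset.sum_range_succ, Finset.sum_range_zero, pow_zero, pow_one, one_mulVec, zero_add,
    sub_zero, Nat.reduceAdd, neg_mulVec, dotProduct_neg, ← hMN] at hlin hquad₀ hquad₁
  have hleading : (fun r => (z r)⁻¹ * (s r ⬝ᵥ s r)) =O[l] fun r => (z r)⁻¹ := by
    simpa using (isBigO_refl (fun r => (z r)⁻¹) l).mul (isBigO_dotProduct hsO hsO)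
  have hsq := hquad₁.mul (hquad₀.add hleading)
  refine ((hlin.const_mul_left 2).sub (hsq.congr_right fun r => (pow_succ _ 2).symm)).congr' ?_
    .rfl
  filter_upwards [eventually_isUnit_smul_one_add hz hN] with r hunit
  rw [← hMN] at hunit
  rw [(hasDerivAt_dotProduct_inv_mulVec_of_vecMulVec (hs r) (hM r) hunit (hsymm r)).deriv]
  ring

end MatrixAsymptotics

theorem exists_pos_forall_norm_le_div_pow {E : Type*} [SeminormedAddCommGroup E] {f : ℝ → E}
    {k : ℕ} (hf : f =O[atTop] fun r : ℝ => r⁻¹ ^ k) :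
    ∃ C > (0 : ℝ), ∃ r₀ > (0 : ℝ), ∀ r : ℝ, r₀ ≤ r → ‖f r‖ ≤ C / r ^ k := by
  obtain ⟨C, hC, hbound⟩ := hf.exists_pos
  obtain ⟨r₁, hr₁⟩ := eventually_atTop.1 hbound.bound
  refine ⟨C, hC, max r₁ 1, by positivity, fun r hr => ?_⟩
  have hr0 : 0 < r := one_pos.trans_le ((le_max_right _ _).trans hr)
  simpa [abs_of_pos hr0, div_eq_mul_inv] using hr₁ r ((le_max_left _ _).trans hr)

section SineIntegrals

theorem integral_cos_const_mul {p : ℝ} (hp : p ≠ 0) (r : ℝ) :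
    ∫ ρ in (0 : ℝ)..r, Real.cos (p * ρ) = Real.sin (p * r) / p := by
  simp [intervalIntegral.integral_comp_mul_left Real.cos hp, div_eq_inv_mul]

theorem integral_sin_mul_sin_eq_sub (m k r : ℝ) :
    ∫ ρ in (0 : ℝ)..r, Real.sin (m * ρ) * Real.sin (k * ρ) =
      ((∫ ρ in (0 : ℝ)..r, Real.cos ((m - k) * ρ)) - ∫ ρ in (0 : ℝ)..r, Real.cos ((m + k) * ρ))
        / 2 := by
  rw [← intervalIntegral.integral_sub (Continuous.intervalIntegrable (by fun_prop) _ _)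
    (Continuous.intervalIntegrable (by fun_prop) _ _), ← intervalIntegral.integral_div]
  refine intervalIntegral.integral_congr fun ρ _ => ?_
  rw [sub_mul, add_mul, ← Real.two_mul_sin_mul_sin]
  ring

theorem integral_sin_const_mul_mul_self {m : ℝ} (hm : m ≠ 0) (r : ℝ) :
    ∫ ρ in (0 : ℝ)..r, Real.sin (m * ρ) * Real.sin (m * ρ) =
      r / 2 - Real.sin (2 * m * r) / (4 * m) := by
  rw [integral_sin_mul_sin_eq_sub, ← two_mul, integral_cos_const_mul (mul_ne_zero two_ne_zero hm)]
  simp only [sub_self, zero_mul, Real.cos_zero, intervalIntegral.integral_const, sub_zero,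
    smul_eq_mul, mul_one]
  field

theorem integral_sin_mul_sin_of_ne {m k : ℝ} (hsub : m - k ≠ 0) (hadd : m + k ≠ 0) (r : ℝ) :
    ∫ ρ in (0 : ℝ)..r, Real.sin (m * ρ) * Real.sin (k * ρ) =
      Real.sin ((m - k) * r) / (2 * (m - k)) - Real.sin ((m + k) * r) / (2 * (m + k)) := by
  rw [integral_sin_mul_sin_eq_sub, integral_cos_const_mul hsub, integral_cos_const_mul hadd]
  field

end SineIntegrals

section SineSystem

variable {ι : Type*} (μ : ι → ℝ)

/-- The vector `s(r)` of the sines `sin (μᵢ r)`, as complex numbers. -/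
noncomputable def sinVec (r : ℝ) (i : ι) : ℂ := (Real.sin (μ i * r) : ℝ)

/-- The derivative `s'(r)` of `sinVec`. -/
noncomputable def sinVecDeriv (r : ℝ) (i : ι) : ℂ := (μ i * Real.cos (μ i * r) : ℝ)

/-- The Gram matrix `G(r)` of the functions `sin (μᵢ ρ)` in `L²(0, r)`. -/
noncomputable def sinGram (r : ℝ) : Matrix ι ι ℂ :=
  of fun i j => ((∫ ρ in (0 : ℝ)..r, Real.sin (μ i * ρ) * Real.sin (μ j * ρ) : ℝ) : ℂ)

/-- The real matrix `h(r)` of the bounded, oscillating part of `sinGram μ r`, which remains when the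
linear growth `(r / 2) 1` is removed. -/
noncomputable def sinGramOsc [DecidableEq ι] (r : ℝ) : Matrix ι ι ℝ :=
  of fun i j => if i = j then -Real.sin (2 * μ i * r) / (4 * μ i)
    else Real.sin ((μ i - μ j) * r) / (2 * (μ i - μ j))
      - Real.sin ((μ i + μ j) * r) / (2 * (μ i + μ j))

theorem isSymm_sinGram (r : ℝ) : (sinGram μ r).IsSymm :=
  .ext fun i j => by simp only [sinGram, of_apply, mul_comm]

theorem sinGram_eq_smul_one_add [DecidableEq ι] {μ : ι → ℝ} (hinj : Function.Injective μ)
    (hadd : ∀ i j, μ i + μ j ≠ 0) (r : ℝ) :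
    sinGram μ r = ((r : ℂ) / 2) • (1 : Matrix ι ι ℂ) + (sinGramOsc μ r).map Complex.ofReal := by
  ext i j
  rcases eq_or_ne i j with rfl | hij
  · have hμ : μ i ≠ 0 := fun h => hadd i i (by simp [h])
    simp [sinGram, sinGramOsc, integral_sin_const_mul_mul_self hμ, neg_div, sub_eq_add_neg]
  · simp [sinGram, sinGramOsc, hij,
      integral_sin_mul_sin_of_ne (sub_ne_zero.2 (hinj.ne hij)) (hadd i j)]

theorem hasDerivAt_sinVec (r : ℝ) : HasDerivAt (sinVec μ) (sinVecDeriv μ r) r := by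
  refine hasDerivAt_pi.2 fun i => HasDerivAt.ofReal_comp ?_
  simpa [mul_comm] using ((hasDerivAt_id r).const_mul (μ i)).sin

theorem hasDerivAt_sinGram [Finite ι] (r : ℝ) :
    HasDerivAt (sinGram μ) (vecMulVec (sinVec μ r) (sinVec μ r)) r := by
  refine hasDerivAt_matrix_iff.2 fun i j => ?_
  have hcont : Continuous fun ρ => Real.sin (μ i * ρ) * Real.sin (μ j * ρ) := by fun_prop
  simpa [sinGram, sinVec, vecMulVec_apply] using
    (hcont.integral_hasStrictDerivAt 0 r).hasDerivAt.ofReal_comp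

variable [Fintype ι]

theorem isBigO_sinVec_one (l : Filter ℝ) : sinVec μ =O[l] fun _ => (1 : ℂ) := by
  refine isBigO_pi.2 fun i => .of_bound 1 (.of_forall fun r => ?_)
  simpa only [sinVec, Complex.norm_real, Real.norm_eq_abs, norm_one, mul_one] using
    Real.abs_sin_le_one (μ i * r)

theorem isBigO_sinVecDeriv_one (l : Filter ℝ) : sinVecDeriv μ =O[l] fun _ => (1 : ℂ) := by
  refine isBigO_pi.2 fun i => .of_bound |μ i| (.of_forall fun r => ?_)
  simpa only [sinVecDeriv, Complex.norm_real, Real.norm_eq_abs, abs_mul, norm_one, mul_one] using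
    mul_le_of_le_one_right (abs_nonneg (μ i)) (Real.abs_cos_le_one (μ i * r))

theorem sinVec_dotProduct_self (r : ℝ) :
    sinVec μ r ⬝ᵥ sinVec μ r = ((∑ j, Real.sin (μ j * r) ^ 2 : ℝ) : ℂ) := by
  simp [dotProduct, sinVec, sq]

theorem two_mul_sinVecDeriv_dotProduct_diagonal_mulVec_sinVec [DecidableEq ι] (a : ι → ℂ) (r : ℝ) :
    2 * (sinVecDeriv μ r ⬝ᵥ diagonal a *ᵥ sinVec μ r) =
      ∑ j, a j * (μ j : ℂ) * ((Real.sin (2 * μ j * r) : ℝ) : ℂ) := by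
  simp only [dotProduct, mulVec_diagonal, Finset.mul_sum, sinVec, sinVecDeriv]
  refine Finset.sum_congr rfl fun j _ => ?_
  rw [mul_assoc 2 (μ j) r, Real.sin_two_mul]
  push_cast
  ring

theorem two_mul_sinVecDeriv_dotProduct_sinVec (r : ℝ) :
    2 * (sinVecDeriv μ r ⬝ᵥ sinVec μ r) = ((∑ j, μ j * Real.sin (2 * μ j * r) : ℝ) : ℂ) := by
  classical
  simpa using two_mul_sinVecDeriv_dotProduct_diagonal_mulVec_sinVec μ 1 r

variable [DecidableEq ι]

theorem sinVecDeriv_dotProduct_sinGramOsc_mulVec_sinVec (r : ℝ) :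
    sinVecDeriv μ r ⬝ᵥ (sinGramOsc μ r).map Complex.ofReal *ᵥ sinVec μ r =
      ((∑ i, ∑ j, sinGramOsc μ r i j * (μ i * Real.sin (μ j * r) * Real.cos (μ i * r)) : ℝ)
        : ℂ) := by
  simp only [dotProduct, mulVec, sinVec, sinVecDeriv, map_apply, Finset.mul_sum]
  push_cast
  refine Finset.sum_congr rfl fun i _ => Finset.sum_congr rfl fun j _ => ?_
  ring

theorem isBigO_sinGramOsc_one (l : Filter ℝ) :
    (fun r => (sinGramOsc μ r).map Complex.ofReal) =O[l] fun _ => (1 : ℂ) := by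
  have hterm (p q : ℝ) : (fun r => Real.sin (p * r) / q) =O[l] fun _ => (1 : ℂ) := by
    refine .of_bound |q|⁻¹ (.of_forall fun r => ?_)
    simpa [div_eq_inv_mul] using
      mul_le_of_le_one_right (inv_nonneg.2 (abs_nonneg q)) (Real.abs_sin_le_one (p * r))
  refine isBigO_matrix_of_apply fun i j => Complex.isBigO_ofReal_left.2 ?_
  simp only [sinGramOsc, of_apply]
  split_ifs
  · simpa only [neg_div] using (hterm _ _).neg_left
  · exact (hterm _ _).sub (hterm _ _)

theorem isBigO_deriv_sinVec_dotProduct_inv_mulVec_sub {μ : ι → ℝ} (hinj : Function.Injective μ)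
    (hadd : ∀ i j, μ i + μ j ≠ 0) (a : ι → ℂ) :
    (fun r : ℝ => deriv (fun t => sinVec μ t ⬝ᵥ (diagonal a + sinGram μ t)⁻¹ *ᵥ sinVec μ t) r
        - (4 / r * (sinVecDeriv μ r ⬝ᵥ sinVec μ r)
          - 4 / r ^ 2 * ((sinVec μ r ⬝ᵥ sinVec μ r) ^ 2 + 2 * (sinVecDeriv μ r ⬝ᵥ
            (diagonal a + (sinGramOsc μ r).map Complex.ofReal) *ᵥ sinVec μ r))))
      =O[atTop] fun r => r⁻¹ ^ 3 := by
  have hsplit (r : ℝ) : diagonal a + sinGram μ r = ((r : ℂ) / 2) • (1 : Matrix ι ι ℂ) +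
      (diagonal a + (sinGramOsc μ r).map Complex.ofReal) := by
    rw [sinGram_eq_smul_one_add hinj hadd, add_left_comm]
  have hz : Tendsto (fun r : ℝ => (r : ℂ) / 2) atTop (cobounded ℂ) := by
    rw [← tendsto_norm_atTop_iff_cobounded]
    simpa using tendsto_abs_atTop_atTop.atTop_div_const two_pos
  have hbounded := (isBigO_const_const (diagonal a) (one_ne_zero (α := ℂ)) atTop).add
    (isBigO_sinGramOsc_one μ atTop)
  have hmain := isBigO_deriv_dotProduct_inv_mulVec_sub (hasDerivAt_sinVec μ)
    (fun r => (hasDerivAt_sinGram μ r).const_add (diagonal a))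
    (fun r => (isSymm_diagonal a).add (isSymm_sinGram μ r)) hsplit hz hbounded
    (isBigO_sinVec_one μ _) (isBigO_sinVecDeriv_one μ _)
  have hrate (r : ℝ) : ((r : ℂ) / 2)⁻¹ ^ 3 = 8 * ((r⁻¹ ^ 3 : ℝ) : ℂ) := by
    push_cast
    ring
  refine (hmain.congr (fun r => ?_) hrate).trans
    ((Complex.isBigO_ofReal_left.2 (isBigO_refl _ _)).const_mul_left 8)
  rw [inv_div]
  ring

end SineSystem

theorem stmt_18_general {ι : Type*} [Fintype ι] [DecidableEq ι] {μ : ι → ℝ}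
    (hinj : Function.Injective μ) (hadd : ∀ i j, μ i + μ j ≠ 0)
    (G : ℝ → Matrix ι ι ℂ)
    (hG : ∀ (r : ℝ) (i j : ι),
      G r i j = ((∫ ρ in (0 : ℝ)..r, Real.sin (μ i * ρ) * Real.sin (μ j * ρ) : ℝ) : ℂ))
    (h : ι → ι → ℝ → ℝ)
    (hh : ∀ (i j : ι) (r : ℝ), h i j r =
      if i = j then -Real.sin (2 * μ i * r) / (4 * μ i)
      else Real.sin ((μ i - μ j) * r) / (2 * (μ i - μ j))
        - Real.sin ((μ i + μ j) * r) / (2 * (μ i + μ j)))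
    (a : ι → ℂ)
    (s : ℝ → ι → ℂ) (hs : ∀ (r : ℝ) (i : ι), s r i = ((Real.sin (μ i * r) : ℝ) : ℂ))
    (v : ℝ → ι → ℂ) (hv : ∀ r : ℝ, v r = -((diagonal a + G r)⁻¹ *ᵥ s r))
    (V : ℝ → ℂ)
    (hV : ∀ r : ℝ, V r = 2 * deriv (fun t : ℝ => ∑ j, ((Real.sin (μ j * t) : ℝ) : ℂ) * v t j) r)
    (W : ℝ → ℝ)
    (hW : ∀ r : ℝ, W r = (∑ j, Real.sin (μ j * r) ^ 2) ^ 2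
      + 2 * ∑ i, ∑ j, h i j r * (μ i * Real.sin (μ j * r) * Real.cos (μ i * r))) :
    ∃ C > (0 : ℝ), ∃ r₀ > (0 : ℝ), ∀ r : ℝ, r₀ ≤ r →
      ‖V r + ((4 / r : ℝ) : ℂ) * ((∑ j, μ j * Real.sin (2 * μ j * r) : ℝ) : ℂ)
          - ((8 / r ^ 2 : ℝ) : ℂ) *
              ((∑ j, a j * (μ j : ℂ) * ((Real.sin (2 * μ j * r) : ℝ) : ℂ)) + ((W r : ℝ) : ℂ))‖
        ≤ C / r ^ 3 := by
  obtain rfl : G = sinGram μ := funext fun r => Matrix.ext (hG r)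
  obtain rfl : s = sinVec μ := funext₂ hs
  obtain rfl : h = fun i j r => sinGramOsc μ r i j := funext₃ hh
  have hpotential (r : ℝ) : V r =
      -2 * deriv (fun t => sinVec μ t ⬝ᵥ (diagonal a + sinGram μ t)⁻¹ *ᵥ sinVec μ t) r := by
    have hneg : (fun t : ℝ => ∑ j, ((Real.sin (μ j * t) : ℝ) : ℂ) * v t j) =
        -fun t => sinVec μ t ⬝ᵥ (diagonal a + sinGram μ t)⁻¹ *ᵥ sinVec μ t :=
      funext fun t => by rw [Pi.neg_apply, ← dotProduct_neg, ← hv]; rfl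
    rw [hV, hneg, deriv.neg]
    ring
  have hW' (r : ℝ) : (W r : ℂ) = (sinVec μ r ⬝ᵥ sinVec μ r) ^ 2 + 2 * (sinVecDeriv μ r ⬝ᵥ
      (sinGramOsc μ r).map Complex.ofReal *ᵥ sinVec μ r) := by
    rw [hW, sinVec_dotProduct_self, sinVecDeriv_dotProduct_sinGramOsc_mulVec_sinVec]
    push_cast
    rfl
  refine exists_pos_forall_norm_le_div_pow
    (((isBigO_deriv_sinVec_dotProduct_inv_mulVec_sub hinj hadd a).const_mul_left (-2)).congr_left
      fun r => ?_)
  rw [hpotential, hW', ← two_mul_sinVecDeriv_dotProduct_sinVec,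
    ← two_mul_sinVecDeriv_dotProduct_diagonal_mulVec_sinVec, add_mulVec, dotProduct_add]
  push_cast
  ring

/-- second-order asymptotic expansion of the potential `V` at infinity. -/
theorem stmt_18 (n : ℕ) (hn : 1 ≤ n) (μ : Fin n → ℝ)
    (hμpos : ∀ i, 0 < μ i) (hμanti : StrictAnti μ)
    (G : ℝ → Matrix (Fin n) (Fin n) ℂ)
    (hG : ∀ (r : ℝ) (i j : Fin n),
      G r i j = ((∫ ρ in (0:ℝ)..r, Real.sin (μ i * ρ) * Real.sin (μ j * ρ) : ℝ) : ℂ))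
    (h : Fin n → Fin n → ℝ → ℝ)
    (hh : ∀ (i j : Fin n) (r : ℝ), h i j r =
      if i = j then -Real.sin (2 * μ i * r) / (4 * μ i)
      else Real.sin ((μ i - μ j) * r) / (2 * (μ i - μ j))
        - Real.sin ((μ i + μ j) * r) / (2 * (μ i + μ j)))
    (a : Fin n → ℂ) (ha : ∀ j, a j ≠ 0 ∧ 0 ≤ (a j).re) (hinv : ∀ r : ℝ, 0 ≤ r → IsUnit (Matrix.diagonal a + G r))
    (s : ℝ → Fin n → ℂ) (hs : ∀ (r : ℝ) (i : Fin n), s r i = ((Real.sin (μ i * r) : ℝ) : ℂ))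
    (v : ℝ → Fin n → ℂ) (hv : ∀ r : ℝ, v r = -((Matrix.diagonal a + G r)⁻¹ *ᵥ s r))
    (V : ℝ → ℂ)
    (hV : ∀ r : ℝ, V r = 2 * deriv (fun t : ℝ => ∑ j, ((Real.sin (μ j * t) : ℝ) : ℂ) * v t j) r)
    (W : ℝ → ℝ)
    (hW : ∀ r : ℝ, W r = (∑ j, Real.sin (μ j * r) ^ 2) ^ 2
      + 2 * ∑ i, ∑ j, h i j r * (μ i * Real.sin (μ j * r) * Real.cos (μ i * r))) :
    ∃ C > (0:ℝ), ∃ r₀ > (0:ℝ), ∀ r : ℝ, r₀ ≤ r →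
      ‖V r + ((4 / r : ℝ) : ℂ) * ((∑ j, μ j * Real.sin (2 * μ j * r) : ℝ) : ℂ)
          - ((8 / r ^ 2 : ℝ) : ℂ) *
              ((∑ j, a j * (μ j : ℂ) * ((Real.sin (2 * μ j * r) : ℝ) : ℂ)) + ((W r : ℝ) : ℂ))‖
        ≤ C / r ^ 3 :=
  stmt_18_general hμanti.injective (fun i j => (add_pos (hμpos i) (hμpos j)).ne') G hG h hh a s hs
    v hv V hV W hW
end
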